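/- Let G₁ be an r₁-regular graph on n₁ vertices and m₁ edges, let p,q ≥ 1 be integers, let G₂ = K_{p,q}, and let α ∈ [0,1]. (1) If r₁ = 1 (so G₁ = P₂, n₁ = 2, m₁ = 1), then the A_α-spectrum of G₁ ∨̇ G₂ consists precisely of: α(1+p+q); α(p+2) repeated q−1 times; α(q+2) repeated p−1 times; and the four roots of F(x) = (x² − α(3+p+q)x − 2(1−2α−α²p−α²q))·(x² − α(4+p+q)x + (4α²+2α²p+2α²q+2αpq−pq)) − 2(1−α)²(x−2α)((x−2α)(p+q) − α(p+q)² + 2pq). (2) If r₁ ≥ 2, then the A_α-spectrum of G₁ ∨̇ G₂ consists precisely of: 2α repeated m₁−n₁ times; α(n₁+p) repeated q−1 times; α(n₁+q) repeated p−1 times; the two roots of G_i(x) = x² − α(2+r₁+p+q)x + α(αr₁+r₁+2αp+2αq) − (1−α)((1−α)r₁ + λ_i(A_α(G₁))) for each i = 2,…,n₁; and the four roots of F(x) = (x² − α(2+r₁+p+q)x − 2(r₁−2αr₁−α²p−α²q))·(x² − α(2n₁+p+q)x + (α²n₁²+α²n₁p+α²n₁q+2αpq−pq)) − n₁(1−α)²(x−2α)((x−αn₁)(p+q)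 − α(p+q)² + 2pq). -/

import Mathlib

open Matrix Polynomial
open scoped Classical

noncomputable section

/-- `A_α(G) = α·D(G) + (1-α)·A(G)`, where `D(G)` is the diagonal degree matrix and
`A(G)` the adjacency matrix. -/
def Aalpha {V : Type*} [Fintype V] (G : SimpleGraph V) (α : ℝ) : Matrix V V ℝ :=
  α • Matrix.diagonal (fun v => (G.degree v : ℝ)) + (1 - α) • G.adjMatrix ℝ

/-- The subdivision-vertex join `G₁ ∨̇ G₂`: take the subdivision graph `S(G₁)` (a new
vertex inserted in each edge of `G₁`) together with `G₂`, and join every original vertex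
of `G₁` with every vertex of `G₂`. -/
def subdivisionVertexJoin {V₁ V₂ : Type*} (G₁ : SimpleGraph V₁) (G₂ : SimpleGraph V₂) :
    SimpleGraph (V₁ ⊕ (↥G₁.edgeSet ⊕ V₂)) :=
  SimpleGraph.fromRel fun a b =>
    match a, b with
    | Sum.inl v, Sum.inr (Sum.inl e) => v ∈ (e : Sym2 V₁)
    | Sum.inl _, Sum.inr (Sum.inr _) => True
    | Sum.inr (Sum.inr u), Sum.inr (Sum.inr w) => G₂.Adj u w
    | _, _ => False

/-!
In `A_α(G ∨̇ H)` the block joining `S(G)` to `H` has rank one, `(1 - α) 𝟙_V 𝟙_Wᵀ`. Hence the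
characteristic polynomial is `χ_S χ_H - N_S N_H`, where `χ_S`, `χ_H` are those of the two diagonal
blocks and `N / χ` is the corresponding coronal `uᵀ (x - M)⁻¹ u`. For `r`-regular `G`, the incidence
relation `R Rᵀ = D + A` and a Schur complement express `χ_S` through the eigenvalues of `A_α(G)`.
The coronals come from vectors constant on the classes of an equitable partition: `x - M` maps such
a vector to a scalar multiple of `u`. Only the factor of `χ_S` belonging to the Perron eigenvalue
`r` interacts with `H`, and for `H = K_{p,q}` it produces the quartic.
-/

section CharpolyBlocks

variable {R m n : Type*} [CommRing R] [Fintype m] [Fintype n] [DecidableEq m] [DecidableEq n]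

theorem det_fromBlocks_smul_one₂₂ (A : Matrix m m R) (B : Matrix m n R) (B' : Matrix n m R)
    (t : R) :
    (fromBlocks A B B' (t • 1)).det * t ^ Fintype.card m =
      t ^ Fintype.card n * (t • A - B * B').det := by
  have hmul : fromBlocks A B B' (t • 1) * fromBlocks (t • 1) 0 (-B') 1 =
      fromBlocks (t • A - B * B') B 0 (t • 1) := by
    simp [fromBlocks_multiply, sub_eq_add_neg]
  simpa [mul_comm] using congrArg det hmul

theorem charmatrix_smul_one (a : R) : charmatrix (a • 1 : Matrix n n R) = (X - C a) • 1 := by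
  simp [smul_one_eq_diagonal]

theorem charpoly_smul_one (a : R) :
    (a • 1 : Matrix n n R).charpoly = (X - C a) ^ Fintype.card n := by
  simp [charpoly, charmatrix_smul_one]

theorem charpoly_fromBlocks_smul_one_smul_one (s t : R) (B : Matrix m n R) (B' : Matrix n m R) :
    (fromBlocks (s • 1) B B' (t • 1)).charpoly * (X - C t) ^ Fintype.card m =
      (X - C t) ^ Fintype.card n *
        (((X - C s) * (X - C t)) • 1 - (B * B').map C : Matrix m m R[X]).det := by
  rw [charpoly, charmatrix_fromBlocks, charmatrix_smul_one, charmatrix_smul_one,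
    det_fromBlocks_smul_one₂₂, smul_smul, Matrix.neg_mul, Matrix.mul_neg, neg_neg,
    ← Matrix.map_mul, mul_comm (X - C s)]

theorem det_smul_one_sub_of_charpoly_eq_prod {K : Type*} [Field K] {M : Matrix n n K} {μ : n → K}
    (hμ : M.charpoly = ∏ i, (X - C (μ i))) (k : K[X]) (t : K) :
    (k • 1 - C t • M.map C : Matrix n n K[X]).det = ∏ i, (k - C (t * μ i)) := by
  rcases eq_or_ne t 0 with rfl | ht
  · simp
  have hC : C t * C t⁻¹ = 1 := by rw [← C_mul, mul_inv_cancel₀ ht, C_1]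
  have hfactor : (k • 1 - C t • M.map C : Matrix n n K[X]) =
      C t • (scalar n (C t⁻¹ * k) - M.map C) := by
    rw [smul_sub, scalar_apply, ← smul_one_eq_diagonal, smul_smul, ← mul_assoc, hC, one_mul]
  rw [hfactor, det_smul, ← eval_charpoly, charpoly_map, hμ, Polynomial.map_prod, eval_prod,
    Fintype.card, ← Finset.prod_const, ← Finset.prod_mul_distrib]
  refine Finset.prod_congr rfl fun i _ => ?_
  simp [mul_sub, ← mul_assoc, hC]

theorem map_dotProduct_adjugate_mulVec {S : Type*} [CommRing S] (φ : R →+* S) (M : Matrix n n R)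
    (v w : n → R) :
    φ (v ⬝ᵥ M.adjugate *ᵥ w) = (φ ∘ v) ⬝ᵥ (φ.mapMatrix M).adjugate *ᵥ (φ ∘ w) := by
  rw [φ.map_dotProduct, ← φ.map_adjugate]
  congr 1
  exact funext fun i => φ.map_mulVec _ _ i

theorem det_fromBlocks_vecMulVec_of_isUnit {A : Matrix m m R} {D : Matrix n n R}
    (hA : IsUnit A.det) (hD : IsUnit D.det) (u z : m → R) (v w : n → R) :
    (fromBlocks A (vecMulVec u v) (vecMulVec w z) D).det =
      A.det * D.det - (z ⬝ᵥ A.adjugate *ᵥ u) * (v ⬝ᵥ D.adjugate *ᵥ w) := by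
  have := invertibleOfIsUnitDet D hD
  have hschur : A - vecMulVec u v * ⅟D * vecMulVec w z =
      A + replicateCol Unit u * replicateRow Unit (-(v ⬝ᵥ D⁻¹ *ᵥ w) • z) := by
    rw [invOf_eq_nonsing_inv, Matrix.mul_assoc, mul_vecMulVec, vecMulVec_mul_vecMulVec,
      ← vecMulVec_eq, neg_smul, vecMulVec_neg, sub_eq_add_neg]
  rw [det_fromBlocks₂₂, hschur, det_add_replicateCol_mul_replicateRow hA, Matrix.mul_assoc,
    ← replicateCol_mulVec, det_unique (n := Unit), ← cramer_eq_adjugate_mulVec,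
    ← cramer_eq_adjugate_mulVec, ← det_smul_inv_mulVec_eq_cramer _ _ hA,
    ← det_smul_inv_mulVec_eq_cramer _ _ hD]
  simp only [Matrix.add_apply, one_apply_eq, replicateRow_mul_replicateCol_apply, smul_dotProduct,
    dotProduct_smul, smul_eq_mul]
  ring

theorem det_fromBlocks_vecMulVec [IsDomain R] {A : Matrix m m R} {D : Matrix n n R}
    (hA : A.det ≠ 0) (hD : D.det ≠ 0) (u z : m → R) (v w : n → R) :
    (fromBlocks A (vecMulVec u v) (vecMulVec w z) D).det =
      A.det * D.det - (z ⬝ᵥ A.adjugate *ᵥ u) * (v ⬝ᵥ D.adjugate *ᵥ w) := by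
  let φ := algebraMap R (FractionRing R)
  have hφ : Function.Injective φ := IsFractionRing.injective R (FractionRing R)
  have hblocks : φ.mapMatrix (fromBlocks A (vecMulVec u v) (vecMulVec w z) D) =
      fromBlocks (φ.mapMatrix A) (vecMulVec (φ ∘ u) (φ ∘ v)) (vecMulVec (φ ∘ w) (φ ∘ z))
        (φ.mapMatrix D) := by
    ext (i | i) (j | j) <;> simp [vecMulVec_apply]
  apply hφ
  rw [φ.map_det, hblocks, det_fromBlocks_vecMulVec_of_isUnit, map_sub, map_mul, map_mul, φ.map_det,
    φ.map_det, map_dotProduct_adjugate_mulVec, map_dotProduct_adjugate_mulVec]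
  · rwa [← φ.map_det, isUnit_iff_ne_zero, map_ne_zero_iff φ hφ]
  · rwa [← φ.map_det, isUnit_iff_ne_zero, map_ne_zero_iff φ hφ]

end CharpolyBlocks

section Coronal

theorem map_C_mulVec_const {R l n : Type*} [CommRing R] [Fintype n]
    (B : Matrix l n R) (f : R[X]) :
    (B.map C *ᵥ fun _ => f) = fun i => C ((B *ᵥ 1) i) * f := by
  ext1 i
  simp [mulVec, dotProduct, Finset.sum_mul]

variable {R m n : Type*} [CommRing R] [Fintype m] [Fintype n] [DecidableEq m] [DecidableEq n]

/-- The numerator of the `u`-weighted coronal `uᵀ (X - A)⁻¹ u` of `A`, whose denominator is the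
characteristic polynomial of `A`. For `u = 1` the quotient is the coronal `Γ_A`; using the adjugate
in place of the inverse keeps it inside `R[X]`. -/
def coronalNum (A : Matrix n n R) (u : n → R) : R[X] :=
  (C ∘ u) ⬝ᵥ (charmatrix A).adjugate *ᵥ (C ∘ u)

theorem mul_coronalNum_of_charmatrix_mulVec_eq {A : Matrix n n R} {u : n → R} {v : n → R[X]}
    {δ : R[X]} (h : charmatrix A *ᵥ v = δ • (C ∘ u)) :
    δ * coronalNum A u = A.charpoly * ((C ∘ u) ⬝ᵥ v) := by
  rw [coronalNum, ← smul_eq_mul, ← dotProduct_smul, ← mulVec_smul, ← h, mulVec_mulVec,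
    adjugate_mul, smul_mulVec, one_mulVec, dotProduct_smul, smul_eq_mul, charpoly]

theorem coronalNum_smul_one (a : R) (u : n → R) :
    coronalNum (a • 1 : Matrix n n R) u = (X - C a) ^ (Fintype.card n - 1) * C (u ⬝ᵥ u) := by
  rw [coronalNum, charmatrix_smul_one, adjugate_smul, adjugate_one, smul_mulVec, one_mulVec,
    dotProduct_smul, smul_eq_mul, C.map_dotProduct]

theorem charpoly_fromBlocks_vecMulVec [IsDomain R] (A : Matrix m m R) (D : Matrix n n R)
    (u : m → R) (v : n → R) :
    (fromBlocks A (vecMulVec u v) (vecMulVec v u) D).charpoly =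
      A.charpoly * D.charpoly - coronalNum A u * coronalNum D v := by
  have hblocks : charmatrix (fromBlocks A (vecMulVec u v) (vecMulVec v u) D) =
      fromBlocks (charmatrix A) (vecMulVec (-(C ∘ u)) (C ∘ v)) (vecMulVec (C ∘ v) (-(C ∘ u)))
        (charmatrix D) := by
    rw [charmatrix_fromBlocks]
    ext (i | i) (j | j) : 2 <;> simp [vecMulVec_apply]
  rw [charpoly, hblocks, det_fromBlocks_vecMulVec (charpoly_monic A).ne_zero
    (charpoly_monic D).ne_zero]
  simp [coronalNum, charpoly, mulVec_neg]

end Coronal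

section ConstBlocks

variable {R m n : Type*} [CommRing R] [IsDomain R] [Fintype m] [Fintype n] [DecidableEq m]
  [DecidableEq n]

theorem X_sub_C_mul_X_sub_C_sub_C_ne_zero (a b d : R) :
    (X - C a) * (X - C b) - C d ≠ 0 := by
  refine (Monic.sub_of_left ((monic_X_sub_C a).mul (monic_X_sub_C b)) ?_).ne_zero
  rw [degree_mul, degree_X_sub_C, degree_X_sub_C]
  exact degree_C_le.trans_lt (by decide)

variable [Nonempty m] [Nonempty n]

theorem charpoly_fromBlocks_smul_one_const (a b c : R) :
    (fromBlocks (a • 1 : Matrix m m R) (of fun _ _ => c) (of fun _ _ => c)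
        (b • 1 : Matrix n n R)).charpoly =
      (X - C a) ^ (Fintype.card m - 1) * (X - C b) ^ (Fintype.card n - 1) *
        ((X - C a) * (X - C b) - C (c ^ 2 * Fintype.card m * Fintype.card n)) := by
  have hblocks : fromBlocks (a • 1 : Matrix m m R) (of fun _ _ => c) (of fun _ _ => c)
        (b • 1 : Matrix n n R) =
      fromBlocks (a • 1) (vecMulVec (fun _ => c) 1) (vecMulVec 1 fun _ => c) (b • 1) := by
    ext (i | i) (j | j) <;> simp
  rw [hblocks, charpoly_fromBlocks_vecMulVec, charpoly_smul_one, charpoly_smul_one,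
    coronalNum_smul_one, coronalNum_smul_one, ← pow_sub_one_mul Fintype.card_ne_zero (X - C a),
    ← pow_sub_one_mul Fintype.card_ne_zero (X - C b)]
  simp only [dotProduct, Finset.sum_const, Finset.card_univ, nsmul_eq_mul, Pi.one_apply, mul_one,
    map_mul, map_pow, map_natCast]
  ring

theorem coronalNum_fromBlocks_smul_one_const (a b c : R) :
    coronalNum (fromBlocks (a • 1 : Matrix m m R) (of fun _ _ => c) (of fun _ _ => c)
        (b • 1 : Matrix n n R)) 1 =
      (X - C a) ^ (Fintype.card m - 1) * (X - C b) ^ (Fintype.card n - 1) *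
        (C (Fintype.card m : R) * (X - C b) + C (Fintype.card n : R) * (X - C a) +
          C (2 * c * Fintype.card m * Fintype.card n)) := by
  have hvec : charmatrix (fromBlocks (a • 1 : Matrix m m R) (of fun _ _ => c) (of fun _ _ => c)
        (b • 1 : Matrix n n R)) *ᵥ
          Sum.elim (fun _ => X - C b + C (c * Fintype.card n))
            (fun _ => X - C a + C (c * Fintype.card m)) =
      ((X - C a) * (X - C b) - C (c ^ 2 * Fintype.card m * Fintype.card n)) •
        (C ∘ (1 : m ⊕ n → R)) := by
    rw [charmatrix_fromBlocks, charmatrix_smul_one, charmatrix_smul_one, fromBlocks_mulVec,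
      Sum.elim_comp_inl, Sum.elim_comp_inr, smul_mulVec, smul_mulVec, one_mulVec, one_mulVec]
    ext1 (i | i) <;>
    · simp only [Sum.elim_inl, Sum.elim_inr, Pi.add_apply, Pi.smul_apply, mulVec, dotProduct,
        Matrix.neg_apply, map_apply, of_apply, Finset.sum_const, Finset.card_univ, nsmul_eq_mul,
        smul_eq_mul, Function.comp_apply, Pi.one_apply, map_one, map_mul, map_pow, map_natCast]
      ring
  refine mul_left_cancel₀ (X_sub_C_mul_X_sub_C_sub_C_ne_zero a b _)
    ((mul_coronalNum_of_charmatrix_mulVec_eq hvec).trans ?_)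
  rw [charpoly_fromBlocks_smul_one_const]
  simp only [dotProduct, Fintype.sum_sum_type, Sum.elim_inl, Sum.elim_inr, Finset.sum_const,
    Finset.card_univ, nsmul_eq_mul, Function.comp_apply, Pi.one_apply, map_one, one_mul, map_mul,
    map_pow, map_natCast, map_ofNat]
  ring

end ConstBlocks

section Aalpha

variable {V W : Type*} [Fintype V] [Fintype W]

theorem Aalpha_apply (G : SimpleGraph V) (α : ℝ) (i j : V) :
    Aalpha G α i j = if i = j then α * G.degree i else if G.Adj i j then 1 - α else 0 := by
  rcases eq_or_ne i j with rfl | h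
  · simp [Aalpha]
  · simp [Aalpha, h]

theorem Aalpha_mulVec_one (G : SimpleGraph V) (α : ℝ) :
    Aalpha G α *ᵥ 1 = fun v => (G.degree v : ℝ) := by
  ext v
  simp only [Aalpha, add_mulVec, smul_mulVec, Pi.add_apply, Pi.smul_apply, mulVec_diagonal,
    Pi.one_apply, mul_one, smul_eq_mul, SimpleGraph.adjMatrix_mulVec_apply, Finset.sum_const,
    SimpleGraph.card_neighborFinset_eq_degree, nsmul_eq_mul]
  ring

theorem trace_Aalpha (G : SimpleGraph V) (α : ℝ) :
    (Aalpha G α).trace = α * ∑ v, (G.degree v : ℝ) := by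
  simp [Aalpha, Matrix.trace_add]

theorem degree_completeBipartiteGraph (x : V ⊕ W) :
    (completeBipartiteGraph V W).degree x =
      Sum.elim (fun _ => Fintype.card W) (fun _ => Fintype.card V) x := by
  rw [← Nat.cast_id (SimpleGraph.degree _ _), SimpleGraph.degree_eq_sum_if_adj,
    Fintype.sum_sum_type]
  cases x <;> simp

variable [DecidableEq V]

theorem Aalpha_completeBipartiteGraph [DecidableEq W] (α : ℝ) :
    Aalpha (completeBipartiteGraph V W) α =
      fromBlocks ((α * Fintype.card W) • 1) (of fun _ _ => 1 - α) (of fun _ _ => 1 - α)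
        ((α * Fintype.card V) • 1) := by
  ext (i | i) (j | j) <;> simp [Aalpha_apply, Matrix.one_apply, degree_completeBipartiteGraph]

theorem isRoot_charpoly_Aalpha [Nonempty V] {G : SimpleGraph V} {r : ℕ}
    (hreg : G.IsRegularOfDegree r) (α : ℝ) : (Aalpha G α).charpoly.IsRoot r := by
  rw [IsRoot, eval_charpoly, ← exists_mulVec_eq_zero_iff]
  refine ⟨1, one_ne_zero, ?_⟩
  ext v
  simp [sub_mulVec, Aalpha_mulVec_one, hreg.degree_eq]

theorem le_of_isRoot_charpoly_Aalpha {G : SimpleGraph V} {r : ℕ} (hreg : G.IsRegularOfDegree r)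
    {α : ℝ} (hα : α ≤ 1) {μ : ℝ} (hμ : (Aalpha G α).charpoly.IsRoot μ) : μ ≤ r := by
  have heigen : Module.End.HasEigenvalue (toLin' (Aalpha G α)) μ := by
    rw [Module.End.hasEigenvalue_iff_isRoot_charpoly]
    simpa using hμ
  obtain ⟨v, hv⟩ := eigenvalue_mem_ball heigen
  have hnorm : ∑ w ∈ Finset.univ.erase v, ‖Aalpha G α v w‖ =
      ∑ w ∈ Finset.univ.erase v, Aalpha G α v w := by
    refine Finset.sum_congr rfl fun w hw => Real.norm_of_nonneg ?_
    rw [Aalpha_apply, if_neg (Finset.ne_of_mem_erase hw).symm]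
    split_ifs <;> linarith
  have hrow : ∑ w, Aalpha G α v w = r := by
    simpa [mulVec, dotProduct, hreg.degree_eq] using congrFun (Aalpha_mulVec_one G α) v
  rw [Metric.mem_closedBall, Real.dist_eq, hnorm] at hv
  rw [← Finset.add_sum_erase _ _ (Finset.mem_univ v)] at hrow
  linarith [le_abs_self (μ - Aalpha G α v v)]

theorem eq_degree_of_charpoly_Aalpha_eq_prod {G : SimpleGraph V} {r : ℕ}
    (hreg : G.IsRegularOfDegree r) {α : ℝ} (hα : α ≤ 1) {μ : V → ℝ}
    (hμ : (Aalpha G α).charpoly = ∏ i, (X - C (μ i))) {i₀ : V} (hi₀ : ∀ i, μ i ≤ μ i₀) :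
    μ i₀ = r := by
  have : Nonempty V := ⟨i₀⟩
  have hroot : ∀ t, (Aalpha G α).charpoly.IsRoot t ↔ ∃ i, t = μ i := fun t => by
    simp [hμ, IsRoot, eval_prod, Finset.prod_eq_zero_iff, sub_eq_zero]
  obtain ⟨i, hi⟩ := (hroot r).1 (isRoot_charpoly_Aalpha hreg α)
  exact le_antisymm (le_of_isRoot_charpoly_Aalpha hreg hα ((hroot _).2 ⟨i₀, rfl⟩)) (hi ▸ hi₀ i)

end Aalpha

theorem two_mul_card_edgeSet_of_isRegularOfDegree {V : Type*} [Fintype V] {G : SimpleGraph V}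
    {r : ℕ} (hreg : G.IsRegularOfDegree r) :
    2 * Fintype.card G.edgeSet = Fintype.card V * r := by
  rw [← SimpleGraph.edgeFinset_card, ← G.sum_degrees_eq_twice_card_edges]
  simp [hreg.degree_eq]

theorem card_eq_two_of_connected_of_isRegularOfDegree_one {V : Type*} [Fintype V]
    {G : SimpleGraph V} (hconn : G.Connected) (hreg : G.IsRegularOfDegree 1) :
    Fintype.card V = 2 := by
  have := hconn.nonempty
  have hpos : 0 < Fintype.card V := Fintype.card_pos
  have hcard := two_mul_card_edgeSet_of_isRegularOfDegree hreg
  have htree := hconn.card_vert_le_card_edgeSet_add_one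
  simp only [Nat.card_eq_fintype_card] at htree
  omega

section EdgeIncidence

variable {V : Type*} (G : SimpleGraph V)

/-- The vertex-edge incidence matrix of `G`. Its columns are indexed by the edges only, whereas
`SimpleGraph.incMatrix` has a column for every element of `Sym2 V`. -/
def edgeIncMatrix : Matrix V G.edgeSet ℝ :=
  (G.incMatrix ℝ).submatrix id (↑)

theorem edgeIncMatrix_apply (v : V) (e : G.edgeSet) :
    edgeIncMatrix G v e = if v ∈ (e : Sym2 V) then 1 else 0 := by
  simp [edgeIncMatrix, SimpleGraph.incMatrix_apply', SimpleGraph.incidenceSet]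

variable [Fintype V]

theorem sum_edgeSet_eq_sum {M : Type*} [AddCommMonoid M] {f : Sym2 V → M}
    (hf : ∀ e ∉ G.edgeSet, f e = 0) :
    ∑ e : G.edgeSet, f e = ∑ e, f e :=
  Fintype.sum_of_injective _ Subtype.val_injective _ _ (by simpa using hf) fun _ => rfl

theorem edgeIncMatrix_mul_transpose :
    edgeIncMatrix G * (edgeIncMatrix G)ᵀ =
      diagonal (fun v => (G.degree v : ℝ)) + G.adjMatrix ℝ := by
  ext v w
  have hsum : (edgeIncMatrix G * (edgeIncMatrix G)ᵀ) v w =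
      (G.incMatrix ℝ * (G.incMatrix ℝ)ᵀ) v w :=
    sum_edgeSet_eq_sum G (f := fun e => G.incMatrix ℝ v e * G.incMatrix ℝ w e) fun e he => by
      rw [G.incMatrix_of_notMem_incidenceSet fun h => he h.1, zero_mul]
  rw [hsum, G.incMatrix_mul_transpose]
  rcases eq_or_ne v w with rfl | h
  · simp
  · simp [h]

theorem edgeIncMatrix_mulVec_one : edgeIncMatrix G *ᵥ 1 = fun v => (G.degree v : ℝ) := by
  ext v
  simp only [← G.sum_incMatrix_apply, mulVec, dotProduct, Pi.one_apply, mul_one]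
  exact sum_edgeSet_eq_sum G (f := G.incMatrix ℝ v) fun e he =>
    G.incMatrix_of_notMem_incidenceSet fun h => he h.1

theorem transpose_edgeIncMatrix_mulVec_one : (edgeIncMatrix G)ᵀ *ᵥ 1 = fun _ => 2 := by
  ext e
  simpa [mulVec, dotProduct, edgeIncMatrix] using
    G.sum_incMatrix_apply_of_mem_edgeSet (R := ℝ) e.2

end EdgeIncidence

section SubdivisionVertexJoin

variable {V W : Type*} (G : SimpleGraph V) (H : SimpleGraph W)

theorem adjMatrix_subdivisionVertexJoin :
    (subdivisionVertexJoin G H).adjMatrix ℝ =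
      fromBlocks 0 (fromCols (edgeIncMatrix G) (of fun _ _ => 1))
        (fromRows (edgeIncMatrix G)ᵀ (of fun _ _ => 1)) (fromBlocks 0 0 0 (H.adjMatrix ℝ)) := by
  ext x y
  rw [SimpleGraph.adjMatrix_apply]
  rcases x with v | e | w <;> rcases y with v' | e' | w'
  case inr.inr.inr.inr =>
    simp [subdivisionVertexJoin, H.adj_comm w' w, and_iff_right_of_imp fun h : H.Adj w w' => h.ne]
  all_goals simp [subdivisionVertexJoin, edgeIncMatrix_apply]

variable [Fintype V] [Fintype W]

theorem degree_subdivisionVertexJoin (x : V ⊕ (G.edgeSet ⊕ W)) :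
    ((subdivisionVertexJoin G H).degree x : ℝ) =
      Sum.elim (fun v => G.degree v + Fintype.card W : V → ℝ)
        (Sum.elim (fun _ => 2) fun w => Fintype.card V + H.degree w) x := by
  rw [← mul_one (SimpleGraph.degree _ _ : ℝ), ← SimpleGraph.adjMatrix_mulVec_const_apply,
    adjMatrix_subdivisionVertexJoin]
  have hV := congrFun (edgeIncMatrix_mulVec_one G)
  have hE := congrFun (transpose_edgeIncMatrix_mulVec_one G)
  have hW (w : W) : ∑ w', H.adjMatrix ℝ w w' = H.degree w := by
    simpa [mulVec, dotProduct] using H.adjMatrix_mulVec_const_apply (α := ℝ) (a := 1) (v := w)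
  simp only [mulVec, dotProduct, transpose_apply, Pi.one_apply, mul_one] at hV hE
  rcases x with v | e | w <;>
    simp [mulVec, dotProduct, hV, hE, hW, -SimpleGraph.adjMatrix_apply]

variable [DecidableEq V]

/-- The principal submatrix of `A_α(G ∨̇ H)` on the vertices of the subdivision graph `S(G)`, when
`H` has `k` vertices: each vertex of `G` has `k` neighbours outside `S(G)`. -/
def AalphaSubdivision (α k : ℝ) : Matrix (V ⊕ G.edgeSet) (V ⊕ G.edgeSet) ℝ :=
  fromBlocks (diagonal fun v => α * (G.degree v + k)) ((1 - α) • edgeIncMatrix G)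
    ((1 - α) • (edgeIncMatrix G)ᵀ) ((2 * α) • 1)

variable [DecidableEq W]

theorem reindex_Aalpha_subdivisionVertexJoin (α : ℝ) :
    reindex (Equiv.sumAssoc V G.edgeSet W).symm (Equiv.sumAssoc V G.edgeSet W).symm
        (Aalpha (subdivisionVertexJoin G H) α) =
      fromBlocks (AalphaSubdivision G α (Fintype.card W))
        (vecMulVec (Sum.elim (fun _ => 1 - α) 0) 1) (vecMulVec 1 (Sum.elim (fun _ => 1 - α) 0))
        ((α * Fintype.card V) • 1 + Aalpha H α) := by
  rw [Aalpha, adjMatrix_subdivisionVertexJoin, Aalpha, AalphaSubdivision]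
  ext ((v | e) | w) ((v' | e') | w')
  case inr.inr =>
    rcases eq_or_ne w w' with rfl | h
    · simp [degree_subdivisionVertexJoin, mul_add]
    · simp [h]
  all_goals
    simp [diagonal_apply, Matrix.one_apply, degree_subdivisionVertexJoin, mul_comm α]

theorem charpoly_Aalpha_subdivisionVertexJoin (α : ℝ) :
    (Aalpha (subdivisionVertexJoin G H) α).charpoly =
      (AalphaSubdivision G α (Fintype.card W)).charpoly *
          ((α * Fintype.card V) • 1 + Aalpha H α).charpoly -
        coronalNum (AalphaSubdivision G α (Fintype.card W)) (Sum.elim (fun _ => 1 - α) 0) *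
          coronalNum ((α * Fintype.card V) • 1 + Aalpha H α) 1 := by
  rw [← charpoly_fromBlocks_vecMulVec, ← reindex_Aalpha_subdivisionVertexJoin, charpoly_reindex]

end SubdivisionVertexJoin

section RegularSubdivision

/-- The quadratic `G_i(x)` attached to the eigenvalue `μ = λ_i(A_α(G))` of an `r`-regular graph `G`,
where `k` is the number of vertices joined to every vertex of `G`. -/
def eigenQuadratic (α r k μ : ℝ) : ℝ[X] :=
  X ^ 2 - C (α * (2 + r + k)) * X + C (α * (α * r + r + 2 * α * k) - (1 - α) * ((1 - α) * r + μ))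

theorem eigenQuadratic_eq_sub (α r k μ : ℝ) :
    eigenQuadratic α r k μ =
      (X - C (α * (r + k))) * (X - C (2 * α)) - C ((1 - α) * ((1 - 2 * α) * r)) -
        C ((1 - α) * μ) := by
  simp only [eigenQuadratic, map_mul, map_add, map_sub, map_one, map_ofNat]
  ring

theorem eigenQuadratic_add (α r p q μ : ℝ) :
    eigenQuadratic α r (p + q) μ =
      X ^ 2 - C (α * (2 + r + p + q)) * X +
        C (α * (α * r + r + 2 * α * p + 2 * α * q) - (1 - α) * ((1 - α) * r + μ)) := by
  rw [eigenQuadratic, mul_add (2 * α), ← add_assoc, ← add_assoc]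

theorem eigenQuadratic_ne_zero (α r k μ : ℝ) : eigenQuadratic α r k μ ≠ 0 := by
  rw [eigenQuadratic_eq_sub, sub_sub, ← C_add]
  exact X_sub_C_mul_X_sub_C_sub_C_ne_zero _ _ _

variable {V : Type*} [Fintype V] [DecidableEq V] {G : SimpleGraph V} {r : ℕ}

theorem smul_edgeIncMatrix_mul_transpose (hreg : G.IsRegularOfDegree r) (α : ℝ) :
    (1 - α) • (edgeIncMatrix G * (edgeIncMatrix G)ᵀ) =
      Aalpha G α + ((1 - 2 * α) * r) • (1 : Matrix V V ℝ) := by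
  rw [edgeIncMatrix_mul_transpose, Aalpha]
  ext v w
  rcases eq_or_ne v w with rfl | h
  · simp only [hreg.degree_eq, Matrix.smul_apply, Matrix.add_apply, diagonal_apply_eq,
      SimpleGraph.adjMatrix_apply, SimpleGraph.irrefl, ↓reduceIte, add_zero, smul_eq_mul, mul_zero,
      one_apply_eq, mul_one]
    ring
  · simp [h]

theorem AalphaSubdivision_eq_fromBlocks_smul_one (hreg : G.IsRegularOfDegree r) (α k : ℝ) :
    AalphaSubdivision G α k =
      fromBlocks ((α * (r + k)) • 1) ((1 - α) • edgeIncMatrix G) ((1 - α) • (edgeIncMatrix G)ᵀ)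
        ((2 * α) • 1) := by
  simp [AalphaSubdivision, hreg.degree_eq, smul_one_eq_diagonal]

theorem charpoly_AalphaSubdivision (hreg : G.IsRegularOfDegree r) {α : ℝ} (k : ℝ) {μ : V → ℝ}
    (hμ : (Aalpha G α).charpoly = ∏ i, (X - C (μ i))) :
    (AalphaSubdivision G α k).charpoly * (X - C (2 * α)) ^ Fintype.card V =
      (X - C (2 * α)) ^ Fintype.card G.edgeSet * ∏ i, eigenQuadratic α r k (μ i) := by
  have hschur : ((X - C (α * (r + k))) * (X - C (2 * α))) • 1 -
        ((1 - α) • edgeIncMatrix G * (1 - α) • (edgeIncMatrix G)ᵀ).map C =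
      (((X - C (α * (r + k))) * (X - C (2 * α)) - C ((1 - α) * ((1 - 2 * α) * r))) • 1 -
        C (1 - α) • (Aalpha G α).map C : Matrix V V ℝ[X]) := by
    rw [Matrix.smul_mul, Matrix.mul_smul, smul_edgeIncMatrix_mul_transpose hreg, smul_add,
      smul_smul, Matrix.map_add _ (map_add _), Matrix.map_smul' C _ _ (fun _ _ => C_mul),
      Matrix.map_smul' C _ _ (fun _ _ => C_mul), Matrix.map_one _ C_0 C_1]
    module
  rw [AalphaSubdivision_eq_fromBlocks_smul_one hreg, charpoly_fromBlocks_smul_one_smul_one, hschur,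
    det_smul_one_sub_of_charpoly_eq_prod hμ]
  simp only [eigenQuadratic_eq_sub]

theorem coronalNum_AalphaSubdivision (hreg : G.IsRegularOfDegree r) (α k : ℝ) :
    eigenQuadratic α r k r * coronalNum (AalphaSubdivision G α k) (Sum.elim (fun _ => 1 - α) 0) =
      (AalphaSubdivision G α k).charpoly *
        (C (Fintype.card V * (1 - α) ^ 2) * (X - C (2 * α))) := by
  have hvec : charmatrix (AalphaSubdivision G α k) *ᵥ
        Sum.elim (fun _ => C (1 - α) * (X - C (2 * α))) (fun _ => C (2 * (1 - α) ^ 2)) =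
      eigenQuadratic α r k r • (C ∘ Sum.elim (fun _ => 1 - α) 0) := by
    rw [AalphaSubdivision_eq_fromBlocks_smul_one hreg, charmatrix_fromBlocks, charmatrix_smul_one,
      charmatrix_smul_one, fromBlocks_mulVec, Sum.elim_comp_inl, Sum.elim_comp_inr, neg_mulVec,
      neg_mulVec, map_C_mulVec_const, map_C_mulVec_const, smul_mulVec, smul_mulVec, smul_mulVec,
      smul_mulVec, one_mulVec, one_mulVec, edgeIncMatrix_mulVec_one,
      transpose_edgeIncMatrix_mulVec_one, eigenQuadratic_eq_sub]
    ext1 (v | e) <;>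
    · simp only [Sum.elim_inl, Sum.elim_inr, Pi.add_apply, Pi.neg_apply, Pi.smul_apply, smul_eq_mul,
        Function.comp_apply, Pi.zero_apply, hreg.degree_eq, map_mul, map_pow, map_add, map_sub,
        map_one, map_zero, map_natCast, map_ofNat]
      ring
  rw [mul_coronalNum_of_charmatrix_mulVec_eq hvec]
  congr 1
  simp only [dotProduct, Fintype.sum_sum_type, Function.comp_apply, Sum.elim_inl, Sum.elim_inr,
    Pi.zero_apply, map_zero, zero_mul, Finset.sum_const_zero, add_zero, Finset.sum_const,
    Finset.card_univ, nsmul_eq_mul, map_mul, map_pow, map_natCast]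
  ring

end RegularSubdivision

section Spectrum

variable {V W : Type*} [Fintype V] [Fintype W] [DecidableEq V] [DecidableEq W] {G : SimpleGraph V}
  {r : ℕ}

theorem charpoly_Aalpha_subdivisionVertexJoin_mul_pow (hreg : G.IsRegularOfDegree r)
    (H : SimpleGraph W) {α : ℝ} {μ : V → ℝ} (hμ : (Aalpha G α).charpoly = ∏ i, (X - C (μ i)))
    {i₀ : V} (hi₀ : μ i₀ = r) :
    (Aalpha (subdivisionVertexJoin G H) α).charpoly * (X - C (2 * α)) ^ Fintype.card V =
      (X - C (2 * α)) ^ Fintype.card G.edgeSet *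
        (∏ i ∈ Finset.univ.erase i₀, eigenQuadratic α r (Fintype.card W) (μ i)) *
        (eigenQuadratic α r (Fintype.card W) r *
            ((α * Fintype.card V) • 1 + Aalpha H α).charpoly -
          C (Fintype.card V * (1 - α) ^ 2) * (X - C (2 * α)) *
            coronalNum ((α * Fintype.card V) • 1 + Aalpha H α) 1) := by
  have hcharpoly := charpoly_AalphaSubdivision hreg (Fintype.card W : ℝ) hμ
  have hcoronal := coronalNum_AalphaSubdivision hreg α (Fintype.card W : ℝ)
  rw [← Finset.mul_prod_erase _ _ (Finset.mem_univ i₀), hi₀] at hcharpoly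
  refine mul_left_cancel₀ (eigenQuadratic_ne_zero α r (Fintype.card W) r) ?_
  rw [charpoly_Aalpha_subdivisionVertexJoin]
  linear_combination
    (eigenQuadratic α r (Fintype.card W) r * ((α * Fintype.card V) • 1 + Aalpha H α).charpoly -
        C (Fintype.card V * (1 - α) ^ 2) * (X - C (2 * α)) *
          coronalNum ((α * Fintype.card V) • 1 + Aalpha H α) 1) * hcharpoly -
      (X - C (2 * α)) ^ Fintype.card V *
        coronalNum ((α * Fintype.card V) • 1 + Aalpha H α) 1 * hcoronal

variable {P Q : Type*} [Fintype P] [Fintype Q] [DecidableEq P] [DecidableEq Q]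

theorem smul_one_add_Aalpha_completeBipartiteGraph (α n : ℝ) :
    (α * n) • 1 + Aalpha (completeBipartiteGraph P Q) α =
      fromBlocks ((α * (n + Fintype.card Q)) • 1) (of fun _ _ => 1 - α) (of fun _ _ => 1 - α)
        ((α * (n + Fintype.card P)) • 1) := by
  rw [Aalpha_completeBipartiteGraph, ← fromBlocks_one, fromBlocks_smul, fromBlocks_add, smul_zero,
    smul_zero, zero_add, zero_add, ← add_smul, ← add_smul, mul_add, mul_add]

/-- The quartic `F(x)` for an `r`-regular graph `G` on `n` vertices: the part of the spectrum of
`A_α(G ∨̇ K_{p,q})` coming from vectors constant on `V(G)`, on the subdivision vertices, and on each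
side of `K_{p,q}`. -/
def quotientQuartic (α n r p q : ℝ) : ℝ[X] :=
  (X ^ 2 - C (α * (2 + r + p + q)) * X - C (2 * (r - 2 * α * r - α ^ 2 * p - α ^ 2 * q))) *
      (X ^ 2 - C (α * (2 * n + p + q)) * X
        + C (α ^ 2 * n ^ 2 + α ^ 2 * n * p + α ^ 2 * n * q + 2 * α * p * q - p * q))
    - C (n * (1 - α) ^ 2) * (X - C (2 * α)) *
      (C (p + q) * (X - C (α * n)) - C (α * (p + q) ^ 2) + C (2 * p * q))

variable [Nonempty P] [Nonempty Q]

theorem charpoly_Aalpha_subdivisionVertexJoin_completeBipartiteGraph_mul_pow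
    (hreg : G.IsRegularOfDegree r) {α : ℝ} {μ : V → ℝ}
    (hμ : (Aalpha G α).charpoly = ∏ i, (X - C (μ i))) {i₀ : V} (hi₀ : μ i₀ = r) :
    (Aalpha (subdivisionVertexJoin G (completeBipartiteGraph P Q)) α).charpoly *
        (X - C (2 * α)) ^ Fintype.card V =
      (X - C (2 * α)) ^ Fintype.card G.edgeSet *
        (X - C (α * (Fintype.card V + Fintype.card P))) ^ (Fintype.card Q - 1) *
        (X - C (α * (Fintype.card V + Fintype.card Q))) ^ (Fintype.card P - 1) *
        (∏ i ∈ Finset.univ.erase i₀,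
          eigenQuadratic α r (Fintype.card P + Fintype.card Q) (μ i)) *
        quotientQuartic α (Fintype.card V) r (Fintype.card P) (Fintype.card Q) := by
  rw [charpoly_Aalpha_subdivisionVertexJoin_mul_pow hreg _ hμ hi₀,
    smul_one_add_Aalpha_completeBipartiteGraph, charpoly_fromBlocks_smul_one_const,
    coronalNum_fromBlocks_smul_one_const, Fintype.card_sum, Nat.cast_add]
  have hquartic : quotientQuartic α (Fintype.card V) r (Fintype.card P) (Fintype.card Q) =
      eigenQuadratic α r (Fintype.card P + Fintype.card Q) r *
          ((X - C (α * (Fintype.card V + Fintype.card Q))) *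
              (X - C (α * (Fintype.card V + Fintype.card P))) -
            C ((1 - α) ^ 2 * Fintype.card P * Fintype.card Q)) -
        C (Fintype.card V * (1 - α) ^ 2) * (X - C (2 * α)) *
          (C (Fintype.card P : ℝ) * (X - C (α * (Fintype.card V + Fintype.card P))) +
            C (Fintype.card Q : ℝ) * (X - C (α * (Fintype.card V + Fintype.card Q))) +
            C (2 * (1 - α) * Fintype.card P * Fintype.card Q)) := by
    simp only [quotientQuartic, eigenQuadratic, map_mul, map_add, map_sub, map_pow, map_one,
      map_ofNat]
    ring
  rw [hquartic]
  ring

theorem prod_erase_eigenQuadratic_of_connected_of_isRegularOfDegree_one (hconn : G.Connected)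
    (hreg : G.IsRegularOfDegree 1) {α : ℝ} (k : ℝ) {μ : V → ℝ}
    (hμ : (Aalpha G α).charpoly = ∏ i, (X - C (μ i))) {i₀ : V} (hi₀ : μ i₀ = 1) :
    ∏ i ∈ Finset.univ.erase i₀, eigenQuadratic α 1 k (μ i) =
      (X - C (2 * α)) * (X - C (α * (1 + k))) := by
  have hcard := card_eq_two_of_connected_of_isRegularOfDegree_one hconn hreg
  obtain ⟨j, hj⟩ : ∃ j, Finset.univ.erase i₀ = {j} := by
    rw [← Finset.card_eq_one, Finset.card_erase_of_mem (Finset.mem_univ _), Finset.card_univ, hcard]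
  have htrace : ∑ i, μ i = 2 * α := by
    have := Matrix.trace_eq_neg_charpoly_nextCoeff (Aalpha G α)
    rw [hμ, prod_X_sub_C_nextCoeff, neg_neg, trace_Aalpha] at this
    simpa [hreg.degree_eq, hcard, mul_comm] using this.symm
  have hμj : μ j = 2 * α - 1 := by
    rw [← Finset.add_sum_erase _ _ (Finset.mem_univ i₀), hj, Finset.sum_singleton, hi₀] at htrace
    linarith
  rw [hj, Finset.prod_singleton, hμj]
  simp only [eigenQuadratic, map_mul, map_add, map_sub, map_one, map_ofNat]
  ring

theorem Aalpha_spectrum_subdivisionVertexJoin_completeBipartite_general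
    (hreg : G.IsRegularOfDegree r) {α : ℝ} {μ : V → ℝ}
    (hμ : (Aalpha G α).charpoly = ∏ i, (X - C (μ i))) {i₀ : V} (hi₀ : μ i₀ = r) :
    (r = 1 → G.Connected →
      (Aalpha (subdivisionVertexJoin G (completeBipartiteGraph P Q)) α).charpoly =
        (X - C (α * (1 + (Fintype.card P + Fintype.card Q)))) *
        (X - C (α * (2 + Fintype.card P))) ^ (Fintype.card Q - 1) *
        (X - C (α * (2 + Fintype.card Q))) ^ (Fintype.card P - 1) *
        quotientQuartic α 2 1 (Fintype.card P) (Fintype.card Q)) ∧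
    (2 ≤ r →
      (Aalpha (subdivisionVertexJoin G (completeBipartiteGraph P Q)) α).charpoly =
        (X - C (2 * α)) ^ (Fintype.card G.edgeSet - Fintype.card V) *
        (X - C (α * (Fintype.card V + Fintype.card P))) ^ (Fintype.card Q - 1) *
        (X - C (α * (Fintype.card V + Fintype.card Q))) ^ (Fintype.card P - 1) *
        (∏ i ∈ Finset.univ.erase i₀,
          eigenQuadratic α r (Fintype.card P + Fintype.card Q) (μ i)) *
        quotientQuartic α (Fintype.card V) r (Fintype.card P) (Fintype.card Q)) := by
  have hspectrum := charpoly_Aalpha_subdivisionVertexJoin_completeBipartiteGraph_mul_pow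
    (P := P) (Q := Q) hreg hμ hi₀
  have hedges := two_mul_card_edgeSet_of_isRegularOfDegree hreg
  have hpow := pow_ne_zero (Fintype.card V) (X_sub_C_ne_zero (2 * α))
  refine ⟨?_, fun hr => mul_right_cancel₀ hpow (hspectrum.trans ?_)⟩
  · rintro rfl hconn
    refine mul_right_cancel₀ hpow (hspectrum.trans ?_)
    have hV := card_eq_two_of_connected_of_isRegularOfDegree_one hconn hreg
    have hE : Fintype.card G.edgeSet = 1 := by omega
    rw [Nat.cast_one] at hi₀ ⊢
    rw [prod_erase_eigenQuadratic_of_connected_of_isRegularOfDegree_one hconn hreg _ hμ hi₀, hV, hE,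
      Nat.cast_ofNat]
    ring
  · have hVE : Fintype.card V ≤ Fintype.card G.edgeSet := by nlinarith
    rw [← pow_sub_mul_pow _ hVE]
    ring

end Spectrum

/-- Corollary: the `A_α`-spectrum (as the factorization of the `A_α`-characteristic
polynomial) of the subdivision-vertex join `G₁ ∨̇ K_{p,q}` of an `r₁`-regular graph `G₁`
and the complete bipartite graph `K_{p,q}`, in the cases `r₁ = 1` and `r₁ ≥ 2`. -/
theorem Aalpha_spectrum_subdivisionVertexJoin_completeBipartite
    {n₁ m₁ r₁ p q : ℕ} (hp : 1 ≤ p) (hq : 1 ≤ q)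
    (G₁ : SimpleGraph (Fin n₁))
    (hconn₁ : G₁.Connected) (hreg₁ : G₁.IsRegularOfDegree r₁)
    (hm : Fintype.card G₁.edgeSet = m₁)
    (α : ℝ) (hα : α ∈ Set.Icc (0 : ℝ) 1)
    (μ₁ : Fin n₁ → ℝ) (hμ₁ : Antitone μ₁)
    (hμ₁ch : (Aalpha G₁ α).charpoly = ∏ i, (X - C (μ₁ i))) :
    (r₁ = 1 →
      (Aalpha (subdivisionVertexJoin G₁ (completeBipartiteGraph (Fin p) (Fin q))) α).charpoly =
        (X - C (α * (1 + p + q))) *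
        (X - C (α * (p + 2))) ^ (q - 1) *
        (X - C (α * (q + 2))) ^ (p - 1) *
        ((X ^ 2 - C (α * (3 + p + q)) * X - C (2 * (1 - 2 * α - α ^ 2 * p - α ^ 2 * q))) *
            (X ^ 2 - C (α * (4 + p + q)) * X
              + C (4 * α ^ 2 + 2 * α ^ 2 * p + 2 * α ^ 2 * q + 2 * α * p * q - p * q))
          - C (2 * (1 - α) ^ 2) * (X - C (2 * α)) *
            (C ((p : ℝ) + q) * (X - C (2 * α)) - C (α * ((p : ℝ) + q) ^ 2) + C (2 * (p : ℝ) * q)))) ∧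
    (2 ≤ r₁ →
      (Aalpha (subdivisionVertexJoin G₁ (completeBipartiteGraph (Fin p) (Fin q))) α).charpoly =
        (X - C (2 * α)) ^ (m₁ - n₁) *
        (X - C (α * (n₁ + p))) ^ (q - 1) *
        (X - C (α * (n₁ + q))) ^ (p - 1) *
        (∏ i ∈ Finset.univ.filter (fun i : Fin n₁ => i.val ≠ 0),
          (X ^ 2 - C (α * (2 + r₁ + p + q)) * X
            + C (α * (α * r₁ + r₁ + 2 * α * p + 2 * α * q)
                - (1 - α) * ((1 - α) * r₁ + μ₁ i)))) *
        ((X ^ 2 - C (α * (2 + r₁ + p + q)) * X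
            - C (2 * (r₁ - 2 * α * r₁ - α ^ 2 * p - α ^ 2 * q))) *
            (X ^ 2 - C (α * (2 * n₁ + p + q)) * X
              + C (α ^ 2 * n₁ ^ 2 + α ^ 2 * n₁ * p + α ^ 2 * n₁ * q + 2 * α * p * q - p * q))
          - C (n₁ * (1 - α) ^ 2) * (X - C (2 * α)) *
            (C ((p : ℝ) + q) * (X - C (α * n₁)) - C (α * ((p : ℝ) + q) ^ 2) + C (2 * (p : ℝ) * q)))) := by
  have hn : 0 < n₁ := Fin.pos_iff_nonempty.mpr hconn₁.nonempty
  have : Nonempty (Fin p) := ⟨⟨0, hp⟩⟩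
  have : Nonempty (Fin q) := ⟨⟨0, hq⟩⟩
  have htop : μ₁ ⟨0, hn⟩ = r₁ :=
    eq_degree_of_charpoly_Aalpha_eq_prod hreg₁ hα.2 hμ₁ch fun i => hμ₁ (Nat.zero_le i)
  have hfilter : Finset.univ.filter (fun i : Fin n₁ => i.val ≠ 0) = Finset.univ.erase ⟨0, hn⟩ := by
    ext i
    simp [Fin.ext_iff]
  obtain ⟨hone, htwo⟩ := Aalpha_spectrum_subdivisionVertexJoin_completeBipartite_general
    (P := Fin p) (Q := Fin q) hreg₁ hμ₁ch htop
  simp only [Fintype.card_fin, hm] at hone htwo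
  refine ⟨fun hr => (hone hr hconn₁).trans ?_, fun hr => ?_⟩
  · simp only [quotientQuartic, map_add, map_sub, map_mul, map_pow, map_one, map_ofNat]
    ring
  · rw [htwo hr, hfilter]
    simp only [quotientQuartic, eigenQuadratic_add]
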